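/- For all a, b, c, a', b', c' ∈ ℝ, the Lie algebra g_ℝ(a,b,c) is not isomorphic to the Lie algebra g⁰_ℝ(a',b',c'). -/

import Mathlib

noncomputable section

/-- The bilinear bracket on K^8 determined by structure constants `c i j`
(given for i < j and extended antisymmetrically). -/
def liebr {K : Type*} [Field K] (c : Fin 8 → Fin 8 → Fin 8 → K)
    (x y : Fin 8 → K) : Fin 8 → K :=
  ∑ i : Fin 8, ∑ j : Fin 8,
    (x i * y j) • (if i < j then c i j else if j < i then -(c j i) else 0)

/-- Isomorphism of the bracket structures. -/
def LieIso {K : Type*} [Field K] (c c' : Fin 8 → Fin 8 → Fin 8 → K) : Prop :=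
  ∃ e : (Fin 8 → K) ≃ₗ[K] (Fin 8 → K),
    ∀ x y, e (liebr c x y) = liebr c' (e x) (e y)

/-- Structure constants of g_ℝ(a,b,c). -/
def gc (a b c : ℝ) : Fin 8 → Fin 8 → Fin 8 → ℝ :=
  fun i j =>
    if i = 0 ∧ j = 1 then Pi.single 3 1
    else if i = 0 ∧ j = 2 then Pi.single 4 1
    else if i = 1 ∧ j = 2 then Pi.single 5 1
    else if i = 0 ∧ j = 3 then Pi.single 6 1
    else if i = 0 ∧ j = 4 then Pi.single 7 1
    else if i = 1 ∧ j = 3 then Pi.single 6 1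
    else if i = 1 ∧ j = 4 then Pi.single 7 (-1)
    else if i = 2 ∧ j = 3 then Pi.single 7 (-1)
    else if i = 2 ∧ j = 4 then Pi.single 6 3
    else if i = 1 ∧ j = 5 then (fun k => if k = 6 then a else if k = 7 then b else 0)
    else if i = 2 ∧ j = 5 then (fun k => if k = 6 then c else if k = 7 then -a else 0)
    else 0

/-- Structure constants of g⁰_ℝ(a,b,c). -/
def g0c (a b c : ℝ) : Fin 8 → Fin 8 → Fin 8 → ℝ :=
  fun i j =>
    if i = 0 ∧ j = 1 then Pi.single 3 1
    else if i = 0 ∧ j = 2 then Pi.single 4 1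
    else if i = 1 ∧ j = 2 then Pi.single 5 1
    else if i = 0 ∧ j = 3 then Pi.single 6 1
    else if i = 0 ∧ j = 4 then Pi.single 7 1
    else if i = 1 ∧ j = 5 then (fun k => if k = 6 then a else if k = 7 then b else 0)
    else if i = 2 ∧ j = 5 then (fun k => if k = 6 then c else if k = 7 then -a else 0)
    else 0

theorem liebr_gc (a b c : ℝ) (x y : Fin 8 → ℝ) :
    liebr (gc a b c) x y = ![0, 0, 0, x 0 * y 1 - x 1 * y 0, x 0 * y 2 - x 2 * y 0,
      x 1 * y 2 - x 2 * y 1,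
      (x 0 * y 3 - x 3 * y 0) + (x 1 * y 3 - x 3 * y 1) + 3 * (x 2 * y 4 - x 4 * y 2)
        + a * (x 1 * y 5 - x 5 * y 1) + c * (x 2 * y 5 - x 5 * y 2),
      (x 0 * y 4 - x 4 * y 0) - (x 1 * y 4 - x 4 * y 1) - (x 2 * y 3 - x 3 * y 2)
        + b * (x 1 * y 5 - x 5 * y 1) - a * (x 2 * y 5 - x 5 * y 2)] := by
  funext k
  fin_cases k <;> simp [liebr, gc, Fin.sum_univ_eight, Pi.single_apply] <;> ring

theorem liebr_g0c (a b c : ℝ) (x y : Fin 8 → ℝ) :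
    liebr (g0c a b c) x y = ![0, 0, 0, x 0 * y 1 - x 1 * y 0, x 0 * y 2 - x 2 * y 0,
      x 1 * y 2 - x 2 * y 1,
      (x 0 * y 3 - x 3 * y 0)
        + a * (x 1 * y 5 - x 5 * y 1) + c * (x 2 * y 5 - x 5 * y 2),
      (x 0 * y 4 - x 4 * y 0)
        + b * (x 1 * y 5 - x 5 * y 1) - a * (x 2 * y 5 - x 5 * y 2)] := by
  funext k
  fin_cases k <;> simp [liebr, g0c, Fin.sum_univ_eight, Pi.single_apply] <;> ring

/-- A vector annihilated by `p × q` and `p × r` is a multiple of `p`. -/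
theorem multiple_of_p {p0 p1 p2 q0 q1 q2 r0 r1 r2 v0 v1 v2 : ℝ}
    (D : p0 * (q1 * r2 - q2 * r1) - p1 * (q0 * r2 - q2 * r0) + p2 * (q0 * r1 - q1 * r0) ≠ 0)
    (h1 : v2 * (p0 * q1 - p1 * q0) - v1 * (p0 * q2 - p2 * q0) + v0 * (p1 * q2 - p2 * q1) = 0)
    (h2 : v2 * (p0 * r1 - p1 * r0) - v1 * (p0 * r2 - p2 * r0) + v0 * (p1 * r2 - p2 * r1) = 0) :
    ∃ l : ℝ, v0 = l * p0 ∧ v1 = l * p1 ∧ v2 = l * p2 := by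
  refine ⟨(v0 * (q1 * r2 - q2 * r1) - v1 * (q0 * r2 - q2 * r0) + v2 * (q0 * r1 - q1 * r0)) /
    (p0 * (q1 * r2 - q2 * r1) - p1 * (q0 * r2 - q2 * r0) + p2 * (q0 * r1 - q1 * r0)), ?_, ?_, ?_⟩
  · rw [div_mul_eq_mul_div, eq_div_iff D]; linear_combination r0 * h1 - q0 * h2
  · rw [div_mul_eq_mul_div, eq_div_iff D]; linear_combination r1 * h1 - q1 * h2
  · rw [div_mul_eq_mul_div, eq_div_iff D]; linear_combination r2 * h1 - q2 * h2

/-- A matrix mapping a plane into a line is singular. -/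
theorem det_zero_of_kernel {m00 m01 m02 m10 m11 m12 m20 m21 m22 u0 u1 u2 : ℝ}
    (hu : ¬ (u0 = 0 ∧ u1 = 0 ∧ u2 = 0))
    (h0 : u0 * m00 + u1 * m10 + u2 * m20 = 0)
    (h1 : u0 * m01 + u1 * m11 + u2 * m21 = 0)
    (h2 : u0 * m02 + u1 * m12 + u2 * m22 = 0) :
    m00 * (m11 * m22 - m12 * m21) - m01 * (m10 * m22 - m12 * m20)
      + m02 * (m10 * m21 - m11 * m20) = 0 := by
  by_contra hd
  apply hu
  refine ⟨?_, ?_, ?_⟩ <;> apply (mul_eq_zero.mp ?_).resolve_left hd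
  · linear_combination (m11 * m22 - m12 * m21) * h0 - (m10 * m22 - m12 * m20) * h1
      + (m10 * m21 - m11 * m20) * h2
  · linear_combination -(m01 * m22 - m02 * m21) * h0 + (m00 * m22 - m02 * m20) * h1
      - (m00 * m21 - m01 * m20) * h2
  · linear_combination (m01 * m12 - m02 * m11) * h0 - (m00 * m12 - m02 * m10) * h1
      + (m00 * m11 - m01 * m10) * h2

theorem det_zero_of_line {m00 m01 m02 m10 m11 m12 m20 m21 m22 l m : ℝ}
    {p0 p1 p2 q0 q1 q2 r0 r1 r2 : ℝ}
    (D : p0 * (q1 * r2 - q2 * r1) - p1 * (q0 * r2 - q2 * r0) + p2 * (q0 * r1 - q1 * r0) ≠ 0)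
    (h0 : q0 * m00 + q1 * m10 + q2 * m20 = l * p0)
    (h1 : q0 * m01 + q1 * m11 + q2 * m21 = l * p1)
    (h2 : q0 * m02 + q1 * m12 + q2 * m22 = l * p2)
    (k0 : r0 * m00 + r1 * m10 + r2 * m20 = m * p0)
    (k1 : r0 * m01 + r1 * m11 + r2 * m21 = m * p1)
    (k2 : r0 * m02 + r1 * m12 + r2 * m22 = m * p2) :
    m00 * (m11 * m22 - m12 * m21) - m01 * (m10 * m22 - m12 * m20)
      + m02 * (m10 * m21 - m11 * m20) = 0 := by
  by_cases hl : l = 0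
  · subst hl
    refine det_zero_of_kernel (u0 := q0) (u1 := q1) (u2 := q2) ?_ (by linarith) (by linarith)
      (by linarith)
    rintro ⟨rfl, rfl, rfl⟩
    exact D (by ring)
  · refine det_zero_of_kernel (u0 := m * q0 - l * r0) (u1 := m * q1 - l * r1)
      (u2 := m * q2 - l * r2) ?_ (by linear_combination m * h0 - l * k0)
      (by linear_combination m * h1 - l * k1) (by linear_combination m * h2 - l * k2)
    rintro ⟨e0, e1, e2⟩
    apply D
    apply (mul_eq_zero.mp ?_).resolve_left hl
    linear_combination -(p1 * q2 - p2 * q1) * e0 + (p0 * q2 - p2 * q0) * e1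
      - (p0 * q1 - p1 * q0) * e2

/-- The algebraic core. -/
theorem core {a b c p0 p1 p2 q0 q1 q2 r0 r1 r2 l7 m7 l8 m8 : ℝ}
    (D : p0 * (q1 * r2 - q2 * r1) - p1 * (q0 * r2 - q2 * r0) + p2 * (q0 * r1 - q1 * r0) ≠ 0)
    (h70 : a * q1 + c * q2 = l7 * p0) (h71 : -3 * q2 = l7 * p1) (h72 : q0 + q1 = l7 * p2)
    (k70 : a * r1 + c * r2 = m7 * p0) (k71 : -3 * r2 = m7 * p1) (k72 : r0 + r1 = m7 * p2)
    (h80 : b * q1 - a * q2 = l8 * p0) (h81 : q1 - q0 = l8 * p1) (h82 : -q2 = l8 * p2)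
    (k80 : b * r1 - a * r2 = m8 * p0) (k81 : r1 - r0 = m8 * p1) (k82 : -r2 = m8 * p2) :
    False := by
  have key : ∀ s t : ℝ, -3 * a * s ^ 3 - (2 * c + 3 * b) * s ^ 2 * t + a * s * t ^ 2
      - b * t ^ 3 = 0 := by
    intro s t
    have := det_zero_of_line (m00 := 0) (m01 := -t) (m02 := s) (m10 := a * s + b * t) (m11 := t)
      (m12 := s) (m20 := c * s - a * t) (m21 := -3 * s) (m22 := -t) (l := s * l7 + t * l8)
      (m := s * m7 + t * m8) D
      (by linear_combination s * h70 + t * h80) (by linear_combination s * h71 + t * h81)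
      (by linear_combination s * h72 + t * h82) (by linear_combination s * k70 + t * k80)
      (by linear_combination s * k71 + t * k81) (by linear_combination s * k72 + t * k82)
    linear_combination this
  have ha : a = 0 := by linarith [key 1 0]
  have hb : b = 0 := by linarith [key 0 1]
  have hc : c = 0 := by linarith [key 1 1]
  subst ha hb hc
  have hp0 : p0 = 0 := by
    by_contra hp
    have z1 : l7 = 0 := (mul_eq_zero.mp (by linarith : l7 * p0 = 0)).resolve_right hp
    have z2 : m7 = 0 := (mul_eq_zero.mp (by linarith : m7 * p0 = 0)).resolve_right hp
    subst z1 z2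
    have e1 : q2 = 0 := by linarith
    have e2 : r2 = 0 := by linarith
    have e3 : q0 = -q1 := by linarith
    have e4 : r0 = -r1 := by linarith
    subst e1 e2 e3 e4
    exact D (by ring)
  subst hp0
  -- two linear equations satisfied by q and r
  have A1 : p1 * q0 + p1 * q1 + 3 * p2 * q2 = 0 := by linear_combination p1 * h72 - p2 * h71
  have A2 : p1 * r0 + p1 * r1 + 3 * p2 * r2 = 0 := by linear_combination p1 * k72 - p2 * k71
  have B1 : -p2 * q0 + p2 * q1 + p1 * q2 = 0 := by linear_combination p2 * h81 - p1 * h82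
  have B2 : -p2 * r0 + p2 * r1 + p1 * r2 = 0 := by linear_combination p2 * k81 - p1 * k82
  -- D * (minors) = 0 : the two rows are both orthogonal to the plane spanned by q and r
  by_cases hm : p1 ^ 2 + 3 * p2 ^ 2 = 0
  · have z1 : p1 = 0 := by nlinarith [sq_nonneg p1, sq_nonneg p2]
    have z2 : p2 = 0 := by nlinarith [sq_nonneg p1, sq_nonneg p2]
    subst z1 z2
    exact D (by ring)
  · have C1 : (2 * p1 * p2 * p1 + (p1 ^ 2 + 3 * p2 ^ 2) * p2) = 0 := by
      apply (mul_eq_zero.mp ?_).resolve_left D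
      linear_combination (r1 * p2 - r2 * p1) * (2 * p1 * p2 * A1 - (p1 ^ 2 + 3 * p2 ^ 2) * B1)
        + (p1 * q2 - p2 * q1) * (2 * p1 * p2 * A2 - (p1 ^ 2 + 3 * p2 ^ 2) * B2)
    have C2 : (2 * p1 * p2 * p1 - (p1 ^ 2 + 3 * p2 ^ 2) * p2) = 0 := by
      apply (mul_eq_zero.mp ?_).resolve_left D
      linear_combination (r2 * 0 - r0 * p2) * (2 * p1 * p2 * A1 - (p1 ^ 2 + 3 * p2 ^ 2) * B1)
        + (p2 * q0 - 0 * q2) * (2 * p1 * p2 * A2 - (p1 ^ 2 + 3 * p2 ^ 2) * B2)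
    have C3 : (2 * p1 * p2 * (3 * p2) - (p1 ^ 2 + 3 * p2 ^ 2) * p1) = 0 := by
      apply (mul_eq_zero.mp ?_).resolve_left D
      linear_combination (r0 * p1 - r1 * 0) * (2 * p1 * p2 * A1 - (p1 ^ 2 + 3 * p2 ^ 2) * B1)
        + (0 * q1 - p1 * q0) * (2 * p1 * p2 * A2 - (p1 ^ 2 + 3 * p2 ^ 2) * B2)
    have z2 : p2 = 0 := by
      apply (mul_eq_zero.mp ?_).resolve_left hm
      linarith
    subst z2
    have z1 : p1 = 0 := by
      apply (mul_eq_zero.mp ?_).resolve_left hm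
      linarith
    subst z1
    exact D (by ring)

/-- Main theorem. -/
theorem g_not_iso_g0 (a b c a' b' c' : ℝ) :
    ¬ LieIso (gc a b c) (g0c a' b' c') := by
  rintro ⟨e, he⟩
  have hf : ∀ x y, e.symm (liebr (g0c a' b' c') x y)
      = liebr (gc a b c) (e.symm x) (e.symm y) := by
    intro x y
    rw [LinearEquiv.symm_apply_eq, he]; simp
  obtain ⟨X, hX⟩ : ∃ X : Fin 8 → Fin 8 → ℝ, ∀ k, X k = Pi.single k 1 := ⟨_, fun _ => rfl⟩
  -- brackets in g0
  have b01 : liebr (g0c a' b' c') (X 0) (X 1) = X 3 := by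
    rw [liebr_g0c]; funext k; fin_cases k <;> simp [hX, Pi.single_apply]
  have b02 : liebr (g0c a' b' c') (X 0) (X 2) = X 4 := by
    rw [liebr_g0c]; funext k; fin_cases k <;> simp [hX, Pi.single_apply]
  have b12 : liebr (g0c a' b' c') (X 1) (X 2) = X 5 := by
    rw [liebr_g0c]; funext k; fin_cases k <;> simp [hX, Pi.single_apply]
  have b03 : liebr (g0c a' b' c') (X 0) (X 3) = X 6 := by
    rw [liebr_g0c]; funext k; fin_cases k <;> simp [hX, Pi.single_apply]
  have b04 : liebr (g0c a' b' c') (X 0) (X 4) = X 7 := by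
    rw [liebr_g0c]; funext k; fin_cases k <;> simp [hX, Pi.single_apply]
  have b13 : liebr (g0c a' b' c') (X 1) (X 3) = 0 := by
    rw [liebr_g0c]; funext k; fin_cases k <;> simp [hX, Pi.single_apply]
  have b14 : liebr (g0c a' b' c') (X 1) (X 4) = 0 := by
    rw [liebr_g0c]; funext k; fin_cases k <;> simp [hX, Pi.single_apply]
  have b23 : liebr (g0c a' b' c') (X 2) (X 3) = 0 := by
    rw [liebr_g0c]; funext k; fin_cases k <;> simp [hX, Pi.single_apply]
  have b24 : liebr (g0c a' b' c') (X 2) (X 4) = 0 := by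
    rw [liebr_g0c]; funext k; fin_cases k <;> simp [hX, Pi.single_apply]
  have f01 := hf (X 0) (X 1)
  have f02 := hf (X 0) (X 2)
  have f12 := hf (X 1) (X 2)
  have f03 := hf (X 0) (X 3)
  have f04 := hf (X 0) (X 4)
  have f13 := hf (X 1) (X 3)
  have f14 := hf (X 1) (X 4)
  have f23 := hf (X 2) (X 3)
  have f24 := hf (X 2) (X 4)
  rw [b01, liebr_gc] at f01
  rw [b02, liebr_gc] at f02
  rw [b12, liebr_gc] at f12
  rw [b03, liebr_gc] at f03
  rw [b04, liebr_gc] at f04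
  rw [b13, map_zero, liebr_gc] at f13
  rw [b14, map_zero, liebr_gc] at f14
  rw [b23, map_zero, liebr_gc] at f23
  rw [b24, map_zero, liebr_gc] at f24
  have expand : ∀ (z : Fin 8 → ℝ) (i : Fin 8), z i = ∑ k, e z k * e.symm (X k) i := by
    intro z i
    have h1 : e z = ∑ k, e z k • X k := by
      simp only [hX]
      exact pi_eq_sum_univ' (e z)
    have h2 : z = ∑ k, e z k • e.symm (X k) := by
      apply e.injective
      rw [map_sum]
      simpa using h1
    have h3 := congrFun h2 i
    simpa [Finset.sum_apply] using h3
  have expand3 : ∀ (z : Fin 8 → ℝ) (i : Fin 8), i < 3 → z i = e z 0 * e.symm (X 0) i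
      + e z 1 * e.symm (X 1) i + e z 2 * e.symm (X 2) i := by
    intro z i hi
    rw [expand z i, Fin.sum_univ_eight, f01, f02, f12, f03, f04]
    fin_cases i <;> simp at hi ⊢
  have hD : e.symm (X 0) 0 * (e.symm (X 1) 1 * e.symm (X 2) 2 - e.symm (X 1) 2 * e.symm (X 2) 1)
      - e.symm (X 0) 1 * (e.symm (X 1) 0 * e.symm (X 2) 2 - e.symm (X 1) 2 * e.symm (X 2) 0)
      + e.symm (X 0) 2 * (e.symm (X 1) 0 * e.symm (X 2) 1 - e.symm (X 1) 1 * e.symm (X 2) 0)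
      ≠ 0 := by
    have hdet : (Matrix.of fun i j : Fin 3 => e (X (Fin.castLE (by omega) i))
          (Fin.castLE (by omega) j)) *
        (Matrix.of fun i j : Fin 3 => e.symm (X (Fin.castLE (by omega) i))
          (Fin.castLE (by omega) j)) = (1 : Matrix (Fin 3) (Fin 3) ℝ) := by
      ext i j
      rw [Matrix.mul_apply, Fin.sum_univ_three]
      have := expand3 (X (Fin.castLE (by omega) i)) (Fin.castLE (by omega) j)
        (by fin_cases j <;> simp [Fin.lt_def])
      refine Eq.trans this.symm ?_
      rw [hX]
      fin_cases i <;> fin_cases j <;> simp [Pi.single_apply]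
    have h := congrArg Matrix.det hdet
    rw [Matrix.det_mul, Matrix.det_one] at h
    have h' := right_ne_zero_of_mul_eq_one h
    rw [Matrix.det_fin_three] at h'
    intro h0
    apply h'
    simp
    linear_combination h0
  have z0 : ∀ i : Fin 8, (0 : Fin 8 → ℝ) i = 0 := fun _ => rfl
  have c13 := congrFun f13 6
  have d13 := congrFun f13 7
  have c14 := congrFun f14 6
  have d14 := congrFun f14 7
  have c23 := congrFun f23 6
  have d23 := congrFun f23 7
  have c24 := congrFun f24 6
  have d24 := congrFun f24 7
  simp [f01] at c13 d13 c23 d23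
  simp [f02] at c14 d14 c24 d24
  generalize e.symm (X 0) = p at *
  generalize e.symm (X 1) = q at *
  generalize e.symm (X 2) = r at *
  obtain ⟨l7, h70, h71, h72⟩ := multiple_of_p (v0 := a * q 1 + c * q 2) (v1 := -3 * q 2)
    (v2 := q 0 + q 1) hD (by linear_combination -c13) (by linear_combination -c14)
  obtain ⟨m7, k70, k71, k72⟩ := multiple_of_p (v0 := a * r 1 + c * r 2) (v1 := -3 * r 2)
    (v2 := r 0 + r 1) hD (by linear_combination -c23) (by linear_combination -c24)
  obtain ⟨l8, h80, h81, h82⟩ := multiple_of_p (v0 := b * q 1 - a * q 2) (v1 := q 1 - q 0)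
    (v2 := -q 2) hD (by linear_combination -d13) (by linear_combination -d14)
  obtain ⟨m8, k80, k81, k82⟩ := multiple_of_p (v0 := b * r 1 - a * r 2) (v1 := r 1 - r 0)
    (v2 := -r 2) hD (by linear_combination -d23) (by linear_combination -d24)
  exact core hD h70 h71 h72 k70 k71 k72 h80 h81 h82 k80 k81 k82
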